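/- Let g and ḡ be geodesically equivalent pseudo-Riemannian metrics on a smooth manifold M, let L = L(g,ḡ) be the associated (1,1)-tensor, and let χ = χ1·χ2 be an admissible factorisation of the characteristic polynomial of L. Then the distributions D1 = ker χ1(L) and D2 = ker χ2(L) are integrable. -/

import Mathlib

open Matrix Polynomial Filter

noncomputable section

variable {ι : Type} [Fintype ι] [DecidableEq ι]

/-- Partial derivative of a real-valued function on `ι → ℝ` in the direction of the
`j`-th coordinate vector. -/
def pd (j : ι) (F : (ι → ℝ) → ℝ) (x : ι → ℝ) : ℝ :=
  fderiv ℝ F x (Pi.single j 1)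

/-- Christoffel symbols `Γ^i_{jk}` of a metric given in local coordinates as a
matrix-valued function. -/
def christoffel (g : (ι → ℝ) → Matrix ι ι ℝ) (x : ι → ℝ) (i j k : ι) : ℝ :=
  (1 / 2) * ∑ m, (g x)⁻¹ i m *
    (pd j (fun y => g y m k) x + pd k (fun y => g y m j) x - pd m (fun y => g y j k) x)

/-- A curve is a geodesic of `g` up to reparametrisation (an unparametrized geodesic):
`γ̈ + Γ(γ̇,γ̇) = α(t)·γ̇` for some function `α`. -/
def IsPregeodesic (g : (ι → ℝ) → Matrix ι ι ℝ) (γ : ℝ → ι → ℝ) : Prop :=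
  ∃ α : ℝ → ℝ, ∀ t : ℝ, ∀ i : ι,
    deriv (fun s => deriv (fun τ => γ τ i) s) t
      + ∑ j, ∑ k, christoffel g (γ t) i j k *
          deriv (fun τ => γ τ j) t * deriv (fun τ => γ τ k) t
      = α t * deriv (fun τ => γ τ i) t

/-- `g` is a pseudo-Riemannian metric (in local coordinates) on the set `U`. -/
structure IsMetricOn (g : (ι → ℝ) → Matrix ι ι ℝ) (U : Set (ι → ℝ)) : Prop where
  smooth : ∀ i j, ContDiffOn ℝ (⊤ : ℕ∞) (fun x => g x i j) U
  symm : ∀ x ∈ U, (g x)ᵀ = g x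
  nondeg : ∀ x ∈ U, IsUnit (g x).det

/-- Two metrics are geodesically equivalent on `U`: they have the same geodesics
considered as unparametrized curves. -/
def GeodEquiv (g gb : (ι → ℝ) → Matrix ι ι ℝ) (U : Set (ι → ℝ)) : Prop :=
  ∀ γ : ℝ → ι → ℝ, ContDiff ℝ (⊤ : ℕ∞) γ → (∀ t, γ t ∈ U) →
    (IsPregeodesic g γ ↔ IsPregeodesic gb γ)

/-- The (1,1)-tensor `L(g,ḡ)^i_j = (det ḡ / det g)^{1/(n+1)} ḡ^{ik} g_{kj}`. -/
def Lten (g gb : (ι → ℝ) → Matrix ι ι ℝ) (x : ι → ℝ) : Matrix ι ι ℝ :=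
  (((gb x).det / (g x).det) ^ ((1 : ℝ) / (Fintype.card ι + 1))) • ((gb x)⁻¹ * g x)

/-- An admissible factorisation `χ = χ₁·χ₂` of the characteristic polynomial of `L`:
both factors are monic of degree ≥ 1, have smooth coefficients, and have no common
complex root at any point of `U`. -/
structure AdmissibleFact (L : (ι → ℝ) → Matrix ι ι ℝ) (U : Set (ι → ℝ))
    (chi1 chi2 : (ι → ℝ) → Polynomial ℝ) : Prop where
  factor : ∀ x ∈ U, (L x).charpoly = chi1 x * chi2 x
  monic1 : ∀ x ∈ U, (chi1 x).Monic
  monic2 : ∀ x ∈ U, (chi2 x).Monic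
  deg1 : ∀ x ∈ U, 1 ≤ (chi1 x).natDegree
  deg2 : ∀ x ∈ U, 1 ≤ (chi2 x).natDegree
  smooth1 : ∀ k, ContDiffOn ℝ (⊤ : ℕ∞) (fun x => (chi1 x).coeff k) U
  smooth2 : ∀ k, ContDiffOn ℝ (⊤ : ℕ∞) (fun x => (chi2 x).coeff k) U
  coprime : ∀ x ∈ U, ¬ ∃ z : ℂ, aeval z (chi1 x) = 0 ∧ aeval z (chi2 x) = 0

/-- The distribution `D = ker χ(L)`. -/
def Dker (L : (ι → ℝ) → Matrix ι ι ℝ) (chi : (ι → ℝ) → Polynomial ℝ) (x : ι → ℝ) :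
    Submodule ℝ (ι → ℝ) :=
  LinearMap.ker (Matrix.mulVecLin (aeval (L x) (chi x)))

/-- A distribution on `U` is integrable (involutive, which is equivalent by the
Frobenius theorem): the Lie bracket of any two smooth vector fields tangent to the
distribution is again tangent to it. -/
def IsIntegrableDist (U : Set (ι → ℝ)) (D : (ι → ℝ) → Submodule ℝ (ι → ℝ)) : Prop :=
  ∀ u v : (ι → ℝ) → ι → ℝ, ContDiffOn ℝ (⊤ : ℕ∞) u U → ContDiffOn ℝ (⊤ : ℕ∞) v U →
    (∀ x ∈ U, u x ∈ D x) → (∀ x ∈ U, v x ∈ D x) →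
    ∀ x ∈ U, (fderiv ℝ v x (u x) - fderiv ℝ u x (v x)) ∈ D x

/-!
If `g` and `ḡ` are geodesically equivalent, the difference of their Levi-Civita connections sends
`(v, v)` to a multiple of `v` for every `v`, so it is `φ ⊗ Id + Id ⊗ φ` for a 1-form `φ`. To see
this at a given point one needs, in every direction, a geodesic through the point that stays in `U`
and is defined on all of `ℝ`; it is a local solution of the geodesic equation precomposed with a
rescaled `arctan`. Comparing `∇g = 0` with `∇̄ḡ = 0` then gives
`∇_u L = u ⊗ a + b ⊗ g(u, ·)` modulo endomorphisms commuting with `L`.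

Put `Q = χ₁(L)` and let `u`, `v` be sections of `ker Q`. Differentiating `Q u = 0` and `Q v = 0`
gives `Q [u, v] = (∇_v Q) u - (∇_u Q) v`. Expand `∇_u Q` in powers of `L` and apply `Q` once more:
the terms commuting with `L`, and those with values in the span of the `L ^ i u`, are killed, and
what remains is symmetric in `u` and `v` because `L` is `g`-self-adjoint. Hence `Q² [u, v] = 0`.
As `χ₁` and `χ₂` are coprime and `χ₁ χ₂` annihilates `L`, `ker Q² = ker Q`.
-/

section Algebra

theorem exists_aeval_eq_mul_aeval_sq {R A : Type*} [CommRing R] [Ring A] [Algebra R A]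
    {p q : R[X]} (hpq : IsCoprime p q) {a : A} (ha : aeval a (p * q) = 0) :
    ∃ c : A, aeval a p = c * aeval a p ^ 2 := by
  obtain ⟨r, s, hrs⟩ := hpq
  have hp : p = r * p ^ 2 + s * (p * q) := by linear_combination (-p) * hrs
  refine ⟨aeval a r, ?_⟩
  calc aeval a p = aeval a (r * p ^ 2 + s * (p * q)) := by rw [← hp]
    _ = aeval a r * aeval a p ^ 2 := by simp only [map_add, map_mul _ s, ha, map_mul _ r, map_pow,
        mul_zero, add_zero]

theorem commute_aeval_of_commute {R A : Type*} [CommRing R] [Ring A] [Algebra R A] {a c : A}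
    (h : Commute c a) (p : R[X]) : Commute c (aeval a p) :=
  Algebra.commute_of_mem_adjoin_singleton_of_commute (aeval_mem_adjoin_singleton R a) h

section SymmetricMatrices

variable {R n : Type*} [CommRing R] [Fintype n]

theorem dotProduct_mulVec_comm {S : Matrix n n R} (hS : S.IsSymm) (z w : n → R) :
    z ⬝ᵥ S *ᵥ w = w ⬝ᵥ S *ᵥ z := by
  rw [Matrix.dotProduct_mulVec, ← Matrix.mulVec_transpose, hS, dotProduct_comm]

theorem isSymm_mul_pow [DecidableEq n] {h T : Matrix n n R} (hh : h.IsSymm)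
    (hT : (h * T).IsSymm) (m : ℕ) : (h * T ^ m).IsSymm := by
  have intertwines : SemiconjBy h T Tᵀ := by rw [SemiconjBy, ← hT, Matrix.transpose_mul, hh]
  rw [Matrix.IsSymm, Matrix.transpose_mul, hh, Matrix.transpose_pow]
  exact (intertwines.pow_right m).symm

end SymmetricMatrices

variable {K V : Type*} [Field K] [AddCommGroup V] [Module K V] {B : V →ₗ[K] V →ₗ[K] V} {c : V → K}

theorem apply_smul_of_bilin_self_eq_smul (h0 : c 0 = 0) (hc : ∀ v, B v v = c v • v)
    (t : K) (v : V) : c (t • v) = t * c v := by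
  obtain htv | htv := eq_or_ne (t • v) 0
  · obtain rfl | rfl := smul_eq_zero.1 htv <;> simp [h0]
  · refine smul_left_injective K htv ?_
    calc c (t • v) • t • v = B (t • v) (t • v) := (hc _).symm
      _ = (t * c v) • t • v := by
        simp only [map_smul, LinearMap.smul_apply, hc]
        module

theorem apply_add_of_bilin_self_eq_smul (h2 : (2 : K) ≠ 0) (h0 : c 0 = 0)
    (hc : ∀ v, B v v = c v • v) (v w : V) : c (v + w) = c v + c w := by
  have hsmul := apply_smul_of_bilin_self_eq_smul h0 hc
  obtain rfl | hv := eq_or_ne v 0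
  · simp [h0]
  by_cases hvw : LinearIndependent K ![v, w]
  · have parallelogram : (c (v + w) + c (v - w) - 2 * c v) • v
        + (c (v + w) - c (v - w) - 2 * c w) • w = 0 := by
      have h : B (v + w) (v + w) + B (v - w) (v - w) = (2 : K) • B v v + (2 : K) • B w w := by
        simp only [map_add, map_sub, LinearMap.add_apply, LinearMap.sub_apply]
        module
      simp only [hc] at h
      linear_combination (norm := module) h
    obtain ⟨hv', hw'⟩ := LinearIndependent.pair_iff.1 hvw _ _ parallelogram
    exact mul_left_cancel₀ h2 (by linear_combination hv' + hw')
  · obtain ⟨s, rfl⟩ : ∃ s : K, s • v = w := by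
      simpa [LinearIndependent.pair_iff' hv] using hvw
    rw [show v + s • v = (1 + s) • v by module, hsmul, hsmul]
    ring

theorem exists_eq_smul_add_smul_of_apply_self_mem_span (h2 : (2 : K) ≠ 0)
    (hsymm : ∀ v w, B v w = B w v) (hB : ∀ v, B v v ∈ Submodule.span K {v}) :
    ∃ φ : V →ₗ[K] K, ∀ v w, B v w = φ v • w + φ w • v := by
  classical
  simp only [Submodule.mem_span_singleton] at hB
  choose c' hc' using hB
  let c : V → K := fun v => if v = 0 then 0 else c' v
  have h0 : c 0 = 0 := if_pos rfl
  have hc : ∀ v, B v v = c v • v := fun v => by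
    obtain rfl | hv := eq_or_ne v 0
    · simp
    · rw [← hc', show c v = c' v from if_neg hv]
  let φ : V →ₗ[K] K :=
    { toFun := c
      map_add' := apply_add_of_bilin_self_eq_smul h2 h0 hc
      map_smul' := apply_smul_of_bilin_self_eq_smul h0 hc }
  refine ⟨(2⁻¹ : K) • φ, fun v w => smul_right_injective V h2 ?_⟩
  have polarization : (2 : K) • B v w = B (v + w) (v + w) - B v v - B w w := by
    simp only [map_add, LinearMap.add_apply, hsymm w v]
    module
  calc (2 : K) • B v w = φ (v + w) • (v + w) - φ v • v - φ w • w := by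
        rw [polarization, hc, hc, hc]; rfl
    _ = φ v • w + φ w • v := by rw [map_add]; module
    _ = (2 : K) • ((2⁻¹ : K) • φ v • w + (2⁻¹ : K) • φ w • v) := by
        rw [smul_add, smul_inv_smul₀ h2, smul_inv_smul₀ h2]
    _ = _ := by simp only [LinearMap.smul_apply, smul_assoc]

end Algebra

section MatrixCalculus

open scoped Matrix.Norms.Operator

variable {m n E : Type*} [NormedAddCommGroup E] [NormedSpace ℝ E] {k : WithTop ℕ∞} {x : E}

theorem contDiffAt_matrix [Fintype m] [Fintype n] {M : E → Matrix m n ℝ} :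
    ContDiffAt ℝ k M x ↔ ∀ i j, ContDiffAt ℝ k (fun y => M y i j) x := by
  let entries : Matrix m n ℝ ≃L[ℝ] (m → n → ℝ) :=
    (Matrix.ofLinearEquiv ℝ).symm.toContinuousLinearEquiv
  rw [← entries.comp_contDiffAt_iff, contDiffAt_pi]
  exact forall_congr' fun i => contDiffAt_pi

theorem fderiv_matrix_apply [Finite m] [Finite n] {M : E → Matrix m n ℝ}
    (hM : DifferentiableAt ℝ M x) (u : E) (i : m) (j : n) :
    fderiv ℝ (fun y => M y i j) x u = fderiv ℝ M x u i j := by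
  have := Fintype.ofFinite m
  have := Fintype.ofFinite n
  let entry : Matrix m n ℝ →L[ℝ] ℝ := (Matrix.entryLinearMap ℝ ℝ i j).toContinuousLinearMap
  exact congrArg (· u) (entry.hasFDerivAt.comp x hM.hasFDerivAt).fderiv

theorem fderiv_mulVec [Finite m] [Fintype n] {M : E → Matrix m n ℝ} {w : E → n → ℝ}
    (hM : DifferentiableAt ℝ M x) (hw : DifferentiableAt ℝ w x) (u : E) :
    fderiv ℝ (fun y => M y *ᵥ w y) x u = fderiv ℝ M x u *ᵥ w x + M x *ᵥ fderiv ℝ w x u := by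
  have := Fintype.ofFinite m
  let mulVecL := (Matrix.mulVecBilin ℝ ℝ (m := m) (n := n) (A := ℝ)).toContinuousBilinearMap
  exact (congrArg (· u) (mulVecL.fderiv_of_bilinear hM hw)).trans (add_comm _ _)

theorem fderiv_smul_matrix [Finite m] [Finite n] {f : E → ℝ} {M : E → Matrix m n ℝ}
    (hf : DifferentiableAt ℝ f x) (hM : DifferentiableAt ℝ M x) (u : E) :
    fderiv ℝ (fun y => f y • M y) x u = fderiv ℝ f x u • M x + f x • fderiv ℝ M x u := by
  have := Fintype.ofFinite m
  have := Fintype.ofFinite n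
  exact (congrArg (· u) (fderiv_fun_smul hf hM)).trans (add_comm _ _)

theorem fderiv_sum_matrix [Finite m] [Finite n] {κ : Type*} {s : Finset κ}
    {M : κ → E → Matrix m n ℝ} (hM : ∀ k ∈ s, DifferentiableAt ℝ (M k) x) (u : E) :
    fderiv ℝ (fun y => ∑ k ∈ s, M k y) x u = ∑ k ∈ s, fderiv ℝ (M k) x u := by
  have := Fintype.ofFinite m
  have := Fintype.ofFinite n
  exact (congrArg (· u) (fderiv_fun_sum hM)).trans (_root_.sum_apply _ _ _)

variable [Fintype n] {M N : E → Matrix n n ℝ}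

theorem fderiv_matrix_mul (hM : DifferentiableAt ℝ M x) (hN : DifferentiableAt ℝ N x) (u : E) :
    fderiv ℝ (fun y => M y * N y) x u = fderiv ℝ M x u * N x + M x * fderiv ℝ N x u := by
  classical
  exact (congrArg (· u) (fderiv_fun_mul' hM hN)).trans (add_comm _ _)

variable [DecidableEq n]

theorem contDiffAt_matrix_det (hM : ContDiffAt ℝ k M x) :
    ContDiffAt ℝ k (fun y => (M y).det) x := by
  simp only [Matrix.det_apply']
  exact ContDiffAt.sum fun σ _ => contDiffAt_const.mul
    (contDiffAt_prod fun i _ => contDiffAt_matrix.1 hM _ _)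

theorem contDiffAt_matrix_inv (hM : ContDiffAt ℝ k M x) (hx : IsUnit (M x).det) :
    ContDiffAt ℝ k (fun y => (M y)⁻¹) x := by
  obtain ⟨m, hm⟩ := (Matrix.isUnit_iff_isUnit_det _).2 hx
  simp only [Matrix.nonsing_inv_eq_ringInverse]
  exact ContDiffAt.comp x (hm ▸ contDiffAt_ringInverse ℝ m) hM

end MatrixCalculus

section CovariantDerivative

open scoped Matrix.Norms.Operator

variable {n : Type*} [Fintype n]

/-- The covariant derivative `∇_u M = ∂_u M + [Γ_u, M]` at `x` of a field `M` of endomorphisms. The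
connection enters only through its matrices `Γ_u` at the point `x`. -/
def covDerivEnd (Γ : (n → ℝ) → Matrix n n ℝ) (M : (n → ℝ) → Matrix n n ℝ) (x u : n → ℝ) :
    Matrix n n ℝ :=
  fderiv ℝ M x u + ⁅Γ u, M x⁆

variable {Γ : (n → ℝ) → Matrix n n ℝ} {L M N : (n → ℝ) → Matrix n n ℝ} {x : n → ℝ}

theorem covDerivEnd_mul (hM : DifferentiableAt ℝ M x) (hN : DifferentiableAt ℝ N x) (u : n → ℝ) :
    covDerivEnd Γ (fun y => M y * N y) x u
      = covDerivEnd Γ M x u * N x + M x * covDerivEnd Γ N x u := by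
  simp only [covDerivEnd, fderiv_matrix_mul hM hN, Ring.lie_def]
  noncomm_ring

theorem covDerivEnd_smul {f : (n → ℝ) → ℝ} (hf : DifferentiableAt ℝ f x)
    (hM : DifferentiableAt ℝ M x) (u : n → ℝ) :
    covDerivEnd Γ (fun y => f y • M y) x u = fderiv ℝ f x u • M x + f x • covDerivEnd Γ M x u := by
  simp only [covDerivEnd, fderiv_smul_matrix hf hM, Ring.lie_def, mul_smul_comm, smul_mul_assoc,
    smul_add, smul_sub, add_assoc]

theorem covDerivEnd_sum {κ : Type*} {s : Finset κ} {M : κ → (n → ℝ) → Matrix n n ℝ}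
    (hM : ∀ m ∈ s, DifferentiableAt ℝ (M m) x) (u : n → ℝ) :
    covDerivEnd Γ (fun y => ∑ m ∈ s, M m y) x u = ∑ m ∈ s, covDerivEnd Γ (M m) x u := by
  simp only [covDerivEnd, fderiv_sum_matrix hM, Ring.lie_def, Finset.mul_sum, Finset.sum_mul,
    Finset.sum_add_distrib, Finset.sum_sub_distrib]

theorem mulVec_fderiv_of_mulVec_eq_zero {w : (n → ℝ) → n → ℝ} (hM : DifferentiableAt ℝ M x)
    (hw : DifferentiableAt ℝ w x) (hMw : ∀ᶠ y in nhds x, M y *ᵥ w y = 0) (z : n → ℝ) :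
    M x *ᵥ fderiv ℝ w x z = -(fderiv ℝ M x z *ᵥ w x) := by
  have h : fderiv ℝ (fun y => M y *ᵥ w y) x z = 0 := by
    rw [Filter.EventuallyEq.fderiv_eq (f := fun _ => 0) hMw, fderiv_fun_const]
    rfl
  rw [fderiv_mulVec hM hw] at h
  exact eq_neg_of_add_eq_zero_right h

theorem mulVec_lieBracket_of_mulVec_eq_zero (hΓ : ∀ u v, Γ u *ᵥ v = Γ v *ᵥ u)
    (hM : DifferentiableAt ℝ M x) {u v : (n → ℝ) → n → ℝ} (hu : DifferentiableAt ℝ u x)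
    (hv : DifferentiableAt ℝ v x) (hMu : ∀ᶠ y in nhds x, M y *ᵥ u y = 0)
    (hMv : ∀ᶠ y in nhds x, M y *ᵥ v y = 0) :
    M x *ᵥ VectorField.lieBracket ℝ u v x
      = covDerivEnd Γ M x (v x) *ᵥ u x - covDerivEnd Γ M x (u x) *ᵥ v x := by
  simp only [VectorField.lieBracket, covDerivEnd, Ring.lie_def, Matrix.mulVec_sub,
    mulVec_fderiv_of_mulVec_eq_zero hM hu hMu, mulVec_fderiv_of_mulVec_eq_zero hM hv hMv,
    Matrix.add_mulVec, Matrix.sub_mulVec, ← Matrix.mulVec_mulVec, hMu.self_of_nhds,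
    hMv.self_of_nhds, Matrix.mulVec_zero]
  rw [hΓ (v x) (u x)]
  abel

variable [DecidableEq n]

theorem covDerivEnd_one (u : n → ℝ) : covDerivEnd Γ (fun _ => 1) x u = 0 := by
  simp [covDerivEnd, Ring.lie_def]

theorem covDerivEnd_pow_succ (hL : DifferentiableAt ℝ L x) (u : n → ℝ) (m : ℕ) :
    covDerivEnd Γ (fun y => L y ^ (m + 1)) x u
      = covDerivEnd Γ L x u * L x ^ m + L x * covDerivEnd Γ (fun y => L y ^ m) x u := by
  simp only [pow_succ']
  exact covDerivEnd_mul hL (hL.fun_pow m) u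

end CovariantDerivative

section Involutivity

open scoped Matrix.Norms.Operator

variable {n : Type*} [Fintype n] [DecidableEq n]

theorem aeval_mulVec_pow_mulVec_eq_zero {R : Type*} [CommRing R] {T : Matrix n n R} {p : R[X]}
    {w : n → R} (hw : aeval T p *ᵥ w = 0) (m : ℕ) : aeval T p *ᵥ (T ^ m *ᵥ w) = 0 := by
  have hTp : Commute (T ^ m) (aeval T p) :=
    commute_aeval_of_commute ((Commute.refl T).pow_left m) p
  rw [Matrix.mulVec_mulVec, ← hTp.eq, ← Matrix.mulVec_mulVec, hw, Matrix.mulVec_zero]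

theorem aeval_mulVec_mulVec_of_commute {T D : Matrix n n ℝ} {z a b ξ w : n → ℝ}
    (hD : Commute (D - vecMulVec z a - vecMulVec b ξ) T) {p : ℝ[X]}
    (hz : aeval T p *ᵥ z = 0) (hw : aeval T p *ᵥ w = 0) :
    aeval T p *ᵥ (D *ᵥ w) = (ξ ⬝ᵥ w) • (aeval T p *ᵥ b) := by
  set C := D - vecMulVec z a - vecMulVec b ξ with hC
  have hCp : aeval T p * C = C * aeval T p := (commute_aeval_of_commute hD p).symm
  have hDw : D *ᵥ w = C *ᵥ w + (a ⬝ᵥ w) • z + (ξ ⬝ᵥ w) • b := by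
    simp only [hC, Matrix.sub_mulVec, Matrix.vecMulVec_mulVec, op_smul_eq_smul]
    module
  rw [hDw, Matrix.mulVec_add, Matrix.mulVec_add, Matrix.mulVec_mulVec, hCp, ← Matrix.mulVec_mulVec]
  simp [Matrix.mulVec_smul, hz, hw]

variable {L : (n → ℝ) → Matrix n n ℝ} {p : (n → ℝ) → ℝ[X]} {N : ℕ}
  {Γ : (n → ℝ) → Matrix n n ℝ} {x : n → ℝ} {h : Matrix n n ℝ}

theorem aeval_eventuallyEq_sum (hN : ∀ᶠ y in nhds x, (p y).natDegree < N) :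
    (fun y => aeval (L y) (p y)) =ᶠ[nhds x]
      fun y => ∑ m ∈ Finset.range N, (p y).coeff m • L y ^ m :=
  hN.mono fun y hy => Polynomial.aeval_eq_sum_range' hy (L y)

theorem differentiableAt_aeval (hL : DifferentiableAt ℝ L x)
    (hp : ∀ m, DifferentiableAt ℝ (fun y => (p y).coeff m) x)
    (hN : ∀ᶠ y in nhds x, (p y).natDegree < N) :
    DifferentiableAt ℝ (fun y => aeval (L y) (p y)) x :=
  (DifferentiableAt.fun_sum fun m _ => (hp m).fun_smul (hL.fun_pow m)).congr_of_eventuallyEq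
    (aeval_eventuallyEq_sum hN)

theorem covDerivEnd_aeval (hL : DifferentiableAt ℝ L x)
    (hp : ∀ m, DifferentiableAt ℝ (fun y => (p y).coeff m) x)
    (hN : ∀ᶠ y in nhds x, (p y).natDegree < N) (u : n → ℝ) :
    covDerivEnd Γ (fun y => aeval (L y) (p y)) x u
      = ∑ m ∈ Finset.range N, (fderiv ℝ (fun y => (p y).coeff m) x u • L x ^ m
        + (p x).coeff m • covDerivEnd Γ (fun y => L y ^ m) x u) := by
  have h := aeval_eventuallyEq_sum (L := L) hN
  calc covDerivEnd Γ (fun y => aeval (L y) (p y)) x u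
      = covDerivEnd Γ (fun y => ∑ m ∈ Finset.range N, (p y).coeff m • L y ^ m) x u := by
        rw [covDerivEnd, covDerivEnd, h.fderiv_eq, h.eq_of_nhds]
    _ = _ := by
        rw [covDerivEnd_sum fun m _ => (hp m).fun_smul (hL.fun_pow m)]
        exact Finset.sum_congr rfl fun m _ => covDerivEnd_smul (hp m) (hL.fun_pow m) u

/-- Compatibility at `x` of an `h`-self-adjoint endomorphism field `L` with the connection `Γ`:
`∇_u L = u ⊗ a + b ⊗ h(u, ·)` modulo endomorphisms commuting with `L`. Working modulo the
centraliser of `L` makes the scalar factor in `L(g, ḡ)` irrelevant. -/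
structure IsCompatibleAt (Γ : (n → ℝ) → Matrix n n ℝ) (h : Matrix n n ℝ)
    (L : (n → ℝ) → Matrix n n ℝ) (x : n → ℝ) : Prop where
  isSymm : h.IsSymm
  isSymm_mul : (h * L x).IsSymm
  exists_commute : ∃ a b : n → ℝ, ∀ u,
    Commute (covDerivEnd Γ L x u - vecMulVec u a - vecMulVec b (h *ᵥ u)) (L x)

theorem IsCompatibleAt.aeval_mulVec_covDerivEnd_pow_comm (hc : IsCompatibleAt Γ h L x)
    (hL : DifferentiableAt ℝ L x) {p : ℝ[X]} {z w : n → ℝ} (hz : aeval (L x) p *ᵥ z = 0)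
    (hw : aeval (L x) p *ᵥ w = 0) (m : ℕ) :
    aeval (L x) p *ᵥ (covDerivEnd Γ (fun y => L y ^ m) x z *ᵥ w)
      = aeval (L x) p *ᵥ (covDerivEnd Γ (fun y => L y ^ m) x w *ᵥ z) := by
  obtain ⟨a, b, hab⟩ := hc.exists_commute
  have first_order : ∀ {z w}, aeval (L x) p *ᵥ z = 0 → aeval (L x) p *ᵥ w = 0 → ∀ m,
      aeval (L x) p *ᵥ (covDerivEnd Γ L x z *ᵥ (L x ^ m *ᵥ w))
        = (z ⬝ᵥ (h * L x ^ m) *ᵥ w) • (aeval (L x) p *ᵥ b) := fun {z w} hz hw m => by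
    rw [aeval_mulVec_mulVec_of_commute (hab z) hz (aeval_mulVec_pow_mulVec_eq_zero hw m),
      ← Matrix.mulVec_mulVec, Matrix.dotProduct_mulVec z, ← Matrix.mulVec_transpose, hc.isSymm]
  induction m with
  | zero => simp only [pow_zero, covDerivEnd_one, Matrix.zero_mulVec]
  | succ m ih =>
    have expand : ∀ {z w}, aeval (L x) p *ᵥ z = 0 → aeval (L x) p *ᵥ w = 0 →
        aeval (L x) p *ᵥ (covDerivEnd Γ (fun y => L y ^ (m + 1)) x z *ᵥ w)
          = (z ⬝ᵥ (h * L x ^ m) *ᵥ w) • (aeval (L x) p *ᵥ b)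
            + L x *ᵥ (aeval (L x) p *ᵥ (covDerivEnd Γ (fun y => L y ^ m) x z *ᵥ w)) :=
      fun {z w} hz hw => by
        have hLp : aeval (L x) p * L x = L x * aeval (L x) p :=
          (commute_aeval_of_commute (Commute.refl (L x)) p).symm
        rw [covDerivEnd_pow_succ hL, Matrix.add_mulVec, Matrix.mulVec_add, ← first_order hz hw]
        simp only [Matrix.mulVec_mulVec, ← mul_assoc, hLp]
    rw [expand hz hw, expand hw hz, ih,
      dotProduct_mulVec_comm (isSymm_mul_pow hc.isSymm hc.isSymm_mul m)]

theorem IsCompatibleAt.aeval_mulVec_covDerivEnd_aeval_comm (hc : IsCompatibleAt Γ h L x)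
    (hL : DifferentiableAt ℝ L x) (hp : ∀ m, DifferentiableAt ℝ (fun y => (p y).coeff m) x)
    (hN : ∀ᶠ y in nhds x, (p y).natDegree < N) {z w : n → ℝ}
    (hz : aeval (L x) (p x) *ᵥ z = 0) (hw : aeval (L x) (p x) *ᵥ w = 0) :
    aeval (L x) (p x) *ᵥ (covDerivEnd Γ (fun y => aeval (L y) (p y)) x z *ᵥ w)
      = aeval (L x) (p x) *ᵥ (covDerivEnd Γ (fun y => aeval (L y) (p y)) x w *ᵥ z) := by
  have coeff_term : ∀ {w} (c : ℝ) m, aeval (L x) (p x) *ᵥ w = 0 →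
      aeval (L x) (p x) *ᵥ ((c • L x ^ m) *ᵥ w) = 0 := fun c m hw => by
    rw [Matrix.smul_mulVec, Matrix.mulVec_smul, aeval_mulVec_pow_mulVec_eq_zero hw, smul_zero]
  simp only [covDerivEnd_aeval hL hp hN, Matrix.sum_mulVec, Matrix.mulVec_sum, Matrix.add_mulVec,
    Matrix.mulVec_add]
  refine Finset.sum_congr rfl fun m _ => ?_
  rw [coeff_term _ m hz, coeff_term _ m hw, Matrix.smul_mulVec, Matrix.smul_mulVec,
    Matrix.mulVec_smul, Matrix.mulVec_smul, hc.aeval_mulVec_covDerivEnd_pow_comm hL hz hw]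

theorem IsCompatibleAt.aeval_mulVec_lieBracket_eq_zero (hc : IsCompatibleAt Γ h L x)
    (hΓ : ∀ u v, Γ u *ᵥ v = Γ v *ᵥ u) (hL : DifferentiableAt ℝ L x)
    (hp : ∀ m, DifferentiableAt ℝ (fun y => (p y).coeff m) x) {q : (n → ℝ) → ℝ[X]}
    (hpq : ∀ᶠ y in nhds x, (L y).charpoly = p y * q y) (hcop : IsCoprime (p x) (q x))
    {u v : (n → ℝ) → n → ℝ} (hu : DifferentiableAt ℝ u x) (hv : DifferentiableAt ℝ v x)
    (hpu : ∀ᶠ y in nhds x, aeval (L y) (p y) *ᵥ u y = 0)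
    (hpv : ∀ᶠ y in nhds x, aeval (L y) (p y) *ᵥ v y = 0) :
    aeval (L x) (p x) *ᵥ VectorField.lieBracket ℝ u v x = 0 := by
  have hN : ∀ᶠ y in nhds x, (p y).natDegree < Fintype.card n + 1 := hpq.mono fun y hy => by
    rw [Nat.lt_succ_iff, ← Matrix.charpoly_natDegree_eq_dim (L y)]
    exact Polynomial.natDegree_le_of_dvd ⟨_, hy⟩ (Matrix.charpoly_monic _).ne_zero
  have hsq : aeval (L x) (p x) ^ 2 *ᵥ VectorField.lieBracket ℝ u v x = 0 := by
    rw [pow_two, ← Matrix.mulVec_mulVec, mulVec_lieBracket_of_mulVec_eq_zero hΓ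
      (differentiableAt_aeval hL hp hN) hu hv hpu hpv, Matrix.mulVec_sub,
      hc.aeval_mulVec_covDerivEnd_aeval_comm hL hp hN hpv.self_of_nhds hpu.self_of_nhds, sub_self]
  obtain ⟨C, hC⟩ := exists_aeval_eq_mul_aeval_sq hcop (a := L x)
    (by rw [← hpq.self_of_nhds, Matrix.aeval_self_charpoly])
  rw [hC, ← Matrix.mulVec_mulVec, hsq, Matrix.mulVec_zero]

end Involutivity

section LeviCivita

open scoped Matrix.Norms.Operator

/-- The matrix of the Levi-Civita connection of `g` in the direction `u`, so that
`∇_u w = ∂_u w + connMatrix g x u *ᵥ w`; its entries are `(Γ_u)^i_k = ∑ j, Γ^i_{jk} u^j`. -/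
def connMatrix (g : (ι → ℝ) → Matrix ι ι ℝ) (x : ι → ℝ) : (ι → ℝ) →ₗ[ℝ] Matrix ι ι ℝ :=
  Fintype.linearCombination ℝ fun j => Matrix.of fun i k => christoffel g x i j k

variable {g : (ι → ℝ) → Matrix ι ι ℝ} {U : Set (ι → ℝ)} {x : ι → ℝ}

theorem connMatrix_single (j : ι) :
    connMatrix g x (Pi.single j 1) = Matrix.of fun i k => christoffel g x i j k := by
  simp [connMatrix, Fintype.linearCombination_apply_single]

theorem connMatrix_mulVec_apply (u v : ι → ℝ) (i : ι) :
    (connMatrix g x u *ᵥ v) i = ∑ j, ∑ k, christoffel g x i j k * u j * v k := by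
  rw [connMatrix, Fintype.linearCombination_apply, Matrix.sum_mulVec, Finset.sum_apply]
  refine Finset.sum_congr rfl fun j _ => ?_
  rw [Matrix.smul_mulVec, Pi.smul_apply, smul_eq_mul, Matrix.mulVec, dotProduct, Finset.mul_sum]
  exact Finset.sum_congr rfl fun k _ => by rw [Matrix.of_apply]; ring

theorem IsMetricOn.contDiffAt (hg : IsMetricOn g U) (hU : IsOpen U) (hx : x ∈ U) :
    ContDiffAt ℝ (⊤ : ℕ∞) g x :=
  contDiffAt_matrix.2 fun i j => (hg.smooth i j).contDiffAt (hU.mem_nhds hx)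

theorem IsMetricOn.differentiableAt (hg : IsMetricOn g U) (hU : IsOpen U) (hx : x ∈ U) :
    DifferentiableAt ℝ g x :=
  (hg.contDiffAt hU hx).differentiableAt (by simp)

theorem IsMetricOn.pd_comm (hg : IsMetricOn g U) (hU : IsOpen U) (hx : x ∈ U) (m j k : ι) :
    pd m (fun y => g y j k) x = pd m (fun y => g y k j) x := by
  have h : (fun y => g y j k) =ᶠ[nhds x] fun y => g y k j := by
    filter_upwards [hU.mem_nhds hx] with y hy using Matrix.IsSymm.apply (hg.symm y hy) k j
  rw [pd, pd, h.fderiv_eq]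

theorem IsMetricOn.christoffel_comm (hg : IsMetricOn g U) (hU : IsOpen U) (hx : x ∈ U)
    (i j k : ι) : christoffel g x i j k = christoffel g x i k j := by
  simp only [christoffel, hg.pd_comm hU hx _ j k]
  congr 1
  exact Finset.sum_congr rfl fun m _ => by ring

theorem IsMetricOn.connMatrix_mulVec_comm (hg : IsMetricOn g U) (hU : IsOpen U) (hx : x ∈ U)
    (u v : ι → ℝ) : connMatrix g x u *ᵥ v = connMatrix g x v *ᵥ u := by
  funext i
  simp only [connMatrix_mulVec_apply]
  rw [Finset.sum_comm]
  refine Finset.sum_congr rfl fun j _ => Finset.sum_congr rfl fun k _ => ?_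
  rw [hg.christoffel_comm hU hx, mul_right_comm]

theorem IsMetricOn.contDiffAt_christoffel (hg : IsMetricOn g U) (hU : IsOpen U) (hx : x ∈ U)
    (i j k : ι) : ContDiffAt ℝ (⊤ : ℕ∞) (fun y => christoffel g y i j k) x := by
  have hpd : ∀ i j k, ContDiffAt ℝ (⊤ : ℕ∞) (pd k fun y => g y i j) x := fun i j k =>
    ((contDiffAt_matrix.1 (hg.contDiffAt hU hx) i j).fderiv_right (by simp)).clm_apply
      contDiffAt_const
  have hinv := contDiffAt_matrix.1 (contDiffAt_matrix_inv (hg.contDiffAt hU hx) (hg.nondeg x hx))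
  exact contDiffAt_const.mul <| ContDiffAt.sum fun m _ =>
    (hinv i m).mul <| ((hpd m k j).add (hpd m j k)).sub (hpd j k m)

theorem IsMetricOn.mul_connMatrix_single_apply (hg : IsMetricOn g U) (hx : x ∈ U) (i j k : ι) :
    (g x * connMatrix g x (Pi.single j 1)) i k = (1 / 2) * (pd j (fun y => g y i k) x
      + pd k (fun y => g y i j) x - pd i (fun y => g y j k) x) := by
  let d : ι → ℝ := fun m => pd j (fun y => g y m k) x + pd k (fun y => g y m j) x
    - pd m (fun y => g y j k) x
  have hd : (fun l => connMatrix g x (Pi.single j 1) l k) = (1 / 2 : ℝ) • ((g x)⁻¹ *ᵥ d) := by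
    rw [connMatrix_single]
    rfl
  calc (g x * connMatrix g x (Pi.single j 1)) i k
      = (g x *ᵥ fun l => connMatrix g x (Pi.single j 1) l k) i := rfl
    _ = (1 / 2) * d i := by
      rw [hd, Matrix.mulVec_smul, Matrix.mulVec_mulVec,
        Matrix.mul_nonsing_inv _ (hg.nondeg x hx), Matrix.one_mulVec]
      rfl

theorem IsMetricOn.fderiv_eq (hg : IsMetricOn g U) (hU : IsOpen U) (hx : x ∈ U) (u : ι → ℝ) :
    fderiv ℝ g x u = g x * connMatrix g x u + (connMatrix g x u)ᵀ * g x := by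
  suffices h : (fderiv ℝ g x : (ι → ℝ) →ₗ[ℝ] Matrix ι ι ℝ)
      = LinearMap.mulLeft ℝ (g x) ∘ₗ connMatrix g x + LinearMap.mulRight ℝ (g x) ∘ₗ
        (Matrix.transposeLinearEquiv ι ι ℝ ℝ).toLinearMap ∘ₗ connMatrix g x from
    LinearMap.congr_fun h u
  refine LinearMap.pi_ext' fun j => LinearMap.ext_ring ?_
  have htr : (connMatrix g x (Pi.single j 1))ᵀ * g x
      = (g x * connMatrix g x (Pi.single j 1))ᵀ := by
    rw [Matrix.transpose_mul, hg.symm x hx]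
  change fderiv ℝ g x (Pi.single j 1) = g x * connMatrix g x (Pi.single j 1)
    + (connMatrix g x (Pi.single j 1))ᵀ * g x
  ext i k
  rw [htr, Matrix.add_apply, Matrix.transpose_apply, hg.mul_connMatrix_single_apply hx,
    hg.mul_connMatrix_single_apply hx, ← fderiv_matrix_apply (hg.differentiableAt hU hx),
    hg.pd_comm hU hx j k i, hg.pd_comm hU hx k j i, hg.pd_comm hU hx i j k]
  simp only [pd]
  ring

end LeviCivita

section Geodesics

variable {g : (ι → ℝ) → Matrix ι ι ℝ} {U : Set (ι → ℝ)} {x : ι → ℝ}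

theorem isPregeodesic_iff {γ : ℝ → ι → ℝ} (hγ : Differentiable ℝ γ)
    (hγ' : Differentiable ℝ (deriv γ)) :
    IsPregeodesic g γ ↔ ∃ α : ℝ → ℝ, ∀ t,
      deriv (deriv γ) t + connMatrix g (γ t) (deriv γ t) *ᵥ deriv γ t = α t • deriv γ t := by
  have hd : ∀ i, deriv (fun s => γ s i) = fun t => deriv γ t i := fun i =>
    funext fun t => (hasDerivAt_pi.1 (hγ t).hasDerivAt i).deriv
  have hdd : ∀ i t, deriv (fun s => deriv γ s i) t = deriv (deriv γ) t i := fun i t =>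
    (hasDerivAt_pi.1 (hγ' t).hasDerivAt i).deriv
  simp only [IsPregeodesic, funext_iff, Pi.add_apply, Pi.smul_apply, smul_eq_mul,
    connMatrix_mulVec_apply, hd, hdd]

/-- The geodesic spray of `g`: the vector field on the tangent bundle whose integral curves are
`t ↦ (γ t, γ' t)` for affinely parametrised geodesics `γ`. -/
def spray (g : (ι → ℝ) → Matrix ι ι ℝ) (p : (ι → ℝ) × (ι → ℝ)) : (ι → ℝ) × (ι → ℝ) :=
  (p.2, -(connMatrix g p.1 p.2 *ᵥ p.2))

theorem IsMetricOn.contDiffOn_spray (hg : IsMetricOn g U) (hU : IsOpen U) :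
    ContDiffOn ℝ (⊤ : ℕ∞) (spray g) (Prod.fst ⁻¹' U) := fun p hp => by
  have hvel : ∀ j, ContDiffAt ℝ (⊤ : ℕ∞) (fun q : (ι → ℝ) × (ι → ℝ) => q.2 j) p :=
    contDiffAt_pi.1 contDiffAt_snd
  refine (contDiffAt_snd.prodMk (contDiffAt_pi.2 fun i => ?_).neg).contDiffWithinAt
  simp only [connMatrix_mulVec_apply]
  exact ContDiffAt.sum fun j _ => ContDiffAt.sum fun k _ =>
    (((hg.contDiffAt_christoffel hU hp i j k).comp p contDiffAt_fst).mul (hvel j)).mul (hvel k)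

theorem isPregeodesic_comp_of_hasDerivAt_spray {β : ℝ → (ι → ℝ) × (ι → ℝ)} {s : Set ℝ}
    (hβ : ∀ t ∈ s, HasDerivAt β (spray g (β t)) t) {h : ℝ → ℝ} (hs : ∀ t, h t ∈ s)
    (hh : Differentiable ℝ h) (hh' : Differentiable ℝ (deriv h)) (h0 : ∀ t, deriv h t ≠ 0) :
    IsPregeodesic g fun t => (β (h t)).1 := by
  have comp : ∀ t, HasDerivAt (fun t => β (h t)) (deriv h t • spray g (β (h t))) t := fun t =>
    (hβ (h t) (hs t)).scomp t (hh t).hasDerivAt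
  have velocity : ∀ t, HasDerivAt (fun t => (β (h t)).1) (deriv h t • (β (h t)).2) t := fun t =>
    (comp t).fst
  have hvelocity : deriv (fun t => (β (h t)).1) = fun t => deriv h t • (β (h t)).2 :=
    funext fun t => (velocity t).deriv
  have acceleration : ∀ t, HasDerivAt (fun t => deriv h t • (β (h t)).2)
      (deriv h t • (deriv h t • (spray g (β (h t))).2) + deriv (deriv h) t • (β (h t)).2) t :=
    fun t => (hh' t).hasDerivAt.fun_smul (comp t).snd
  refine (isPregeodesic_iff (fun t => (velocity t).differentiableAt) ?_).2
    ⟨fun t => deriv (deriv h) t / deriv h t, fun t => ?_⟩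
  · exact hvelocity ▸ fun t => (acceleration t).differentiableAt
  · simp only [hvelocity, (acceleration t).deriv, spray, map_smul, Matrix.mulVec_smul,
      Matrix.smul_mulVec, smul_neg, smul_smul, div_mul_cancel₀ _ (h0 t)]
    abel

theorem exists_contDiffOn_hasDerivAt {E : Type*} [NormedAddCommGroup E] [NormedSpace ℝ E]
    [CompleteSpace E] {F : E → E} {W : Set E} (hW : IsOpen W) (hF : ContDiffOn ℝ (⊤ : ℕ∞) F W)
    {p : E} (hp : p ∈ W) : ∃ α : ℝ → E, α 0 = p ∧ ∃ r > 0,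
      ContDiffOn ℝ (⊤ : ℕ∞) α (Set.Icc (-r) r) ∧
      ∀ t ∈ Set.Icc (-r) r, α t ∈ W ∧ HasDerivAt α (F (α t)) t := by
  obtain ⟨α, hα0, ε, hε, hα⟩ :=
    ContDiffAt.exists_forall_mem_closedBall_exists_eq_forall_mem_Ioo_hasDerivAt₀
      ((hF.contDiffAt (hW.mem_nhds hp)).of_le (by simp)) 0
  have hmem : ∀ᶠ t in nhds (0 : ℝ), α t ∈ W :=
    (hα 0 (by simp [hε])).continuousAt.eventually_mem (hW.mem_nhds (hα0 ▸ hp))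
  have hderiv : ∀ᶠ t in nhds (0 : ℝ), HasDerivAt α (F (α t)) t :=
    Filter.mem_of_superset (Ioo_mem_nhds (by simp [hε]) (by simp [hε])) hα
  obtain ⟨r, hr, hball⟩ := Metric.nhds_basis_closedBall.eventually_iff.1 (hmem.and hderiv)
  rw [Real.closedBall_eq_Icc, zero_sub, zero_add] at hball
  have hF' : ContDiffOn ℝ (⊤ : ℕ∞) (Function.uncurry fun _ : ℝ => F) (Set.Icc (-r) r ×ˢ W) :=
    hF.comp contDiffOn_snd fun _ ht => ht.2
  exact ⟨α, hα0, r, hr, ODE.contDiffOn_enat_Icc_of_hasDerivWithinAt hF'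
    (fun t ht => (hball ht).2.hasDerivWithinAt) fun t ht => (hball ht).1, fun t ht => hball ht⟩

theorem exists_reparametrisation {r : ℝ} (hr : 0 < r) :
    ∃ h : ℝ → ℝ, ContDiff ℝ (⊤ : ℕ∞) h ∧ h 0 = 0 ∧ (∀ t, h t ∈ Set.Icc (-r) r) ∧
      ∀ t, deriv h t ≠ 0 := by
  refine ⟨fun t => r / 2 * Real.arctan t, contDiff_const.mul Real.contDiff_arctan, by simp,
    fun t => ?_, fun t => ?_⟩
  · change r / 2 * Real.arctan t ∈ Set.Icc (-r) r
    have h := abs_lt.2 ⟨Real.neg_pi_div_two_lt_arctan t, Real.arctan_lt_pi_div_two t⟩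
    rw [Set.mem_Icc, ← abs_le, abs_mul, abs_of_pos (half_pos hr)]
    nlinarith [Real.pi_lt_four]
  · rw [((Real.hasDerivAt_arctan t).const_mul _).deriv]
    positivity

theorem IsMetricOn.exists_isPregeodesic (hg : IsMetricOn g U) (hU : IsOpen U) (hx : x ∈ U)
    (v : ι → ℝ) : ∃ γ : ℝ → ι → ℝ, ContDiff ℝ (⊤ : ℕ∞) γ ∧ (∀ t, γ t ∈ U) ∧ IsPregeodesic g γ ∧
      γ 0 = x ∧ ∃ c ≠ (0 : ℝ), deriv γ 0 = c • v := by
  obtain ⟨β, hβ0, r, hr, hsmooth, hβ⟩ := exists_contDiffOn_hasDerivAt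
    (hU.preimage continuous_fst) (hg.contDiffOn_spray hU) (p := (x, v)) hx
  obtain ⟨h, hh, h0, hmaps, hne⟩ := exists_reparametrisation hr
  have hd : Differentiable ℝ h := hh.differentiable (by simp)
  have hd' : Differentiable ℝ (deriv h) :=
    (contDiff_infty_iff_deriv.1 hh).2.differentiable (by simp)
  refine ⟨fun t => (β (h t)).1, contDiff_fst.comp ?_, fun t => (hβ _ (hmaps t)).1,
    isPregeodesic_comp_of_hasDerivAt_spray (fun t ht => (hβ t ht).2) hmaps hd hd'
      hne, by simp [h0, hβ0], deriv h 0, hne 0, ?_⟩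
  · exact contDiffOn_univ.1 (hsmooth.comp hh.contDiffOn fun t _ => hmaps t)
  · have hv : HasDerivAt (fun t => (β (h t)).1) (deriv h 0 • (β (h 0)).2) 0 :=
      ((hβ _ (hmaps 0)).2.scomp 0 (hd 0).hasDerivAt).fst
    simpa [h0, hβ0] using hv.deriv

end Geodesics

section ProjectiveEquivalence

open scoped Matrix.Norms.Operator

variable {g gb : (ι → ℝ) → Matrix ι ι ℝ} {U : Set (ι → ℝ)} {x : ι → ℝ}

theorem GeodEquiv.connMatrix_sub_mulVec_self_mem_span (hge : GeodEquiv g gb U) (hU : IsOpen U)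
    (hg : IsMetricOn g U) (hx : x ∈ U) (v : ι → ℝ) :
    (connMatrix gb x - connMatrix g x) v *ᵥ v ∈ Submodule.span ℝ {v} := by
  obtain ⟨γ, hγ, hγU, hpre, rfl, c, hc, hv⟩ := hg.exists_isPregeodesic hU hx v
  have hd : Differentiable ℝ γ := hγ.differentiable (by simp)
  have hd' : Differentiable ℝ (deriv γ) :=
    (contDiff_infty_iff_deriv.1 hγ).2.differentiable (by simp)
  obtain ⟨β, hβ⟩ := (isPregeodesic_iff hd hd').1 ((hge γ hγ hγU).1 hpre)
  obtain ⟨α, hα⟩ := (isPregeodesic_iff hd hd').1 hpre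
  have hsub : (c * c) • (connMatrix gb (γ 0) - connMatrix g (γ 0)) v *ᵥ v
      = ((β 0 - α 0) * c) • v := by
    have h := congrArg₂ (· - ·) (hβ 0) (hα 0)
    simp only [hv, map_smul, Matrix.smul_mulVec, Matrix.mulVec_smul] at h
    rw [LinearMap.sub_apply, Matrix.sub_mulVec]
    linear_combination (norm := module) h
  rw [← Submodule.smul_mem_iff _ (mul_ne_zero hc hc), hsub]
  exact Submodule.smul_mem _ _ (Submodule.mem_span_singleton_self v)

theorem GeodEquiv.exists_connMatrix_eq (hge : GeodEquiv g gb U) (hU : IsOpen U)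
    (hg : IsMetricOn g U) (hgb : IsMetricOn gb U) (hx : x ∈ U) :
    ∃ φ : ι → ℝ, ∀ u, connMatrix gb x u
      = connMatrix g x u + (φ ⬝ᵥ u) • (1 : Matrix ι ι ℝ) + vecMulVec u φ := by
  let S : (ι → ℝ) →ₗ[ℝ] (ι → ℝ) →ₗ[ℝ] ι → ℝ :=
    Matrix.mulVecBilin ℝ ℝ ∘ₗ (connMatrix gb x - connMatrix g x)
  have hS : ∀ u v, S u v = connMatrix gb x u *ᵥ v - connMatrix g x u *ᵥ v := fun u v =>
    Matrix.sub_mulVec _ _ _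
  obtain ⟨φ, hφ⟩ := exists_eq_smul_add_smul_of_apply_self_mem_span (B := S) two_ne_zero
    (fun u v => by
      rw [hS, hS, hg.connMatrix_mulVec_comm hU hx, hgb.connMatrix_mulVec_comm hU hx])
    (hge.connMatrix_sub_mulVec_self_mem_span hU hg hx)
  obtain ⟨a, rfl⟩ := (dotProductEquiv ℝ ι).surjective φ
  refine ⟨a, fun u => Matrix.ext_of_mulVec_single fun k => ?_⟩
  rw [Matrix.add_mulVec, Matrix.add_mulVec, Matrix.smul_mulVec, Matrix.one_mulVec,
    Matrix.vecMulVec_mulVec, op_smul_eq_smul]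
  exact eq_add_of_sub_eq' ((hS u _).symm.trans (hφ u _)) |>.trans (add_assoc _ _ _).symm

theorem IsMetricOn.differentiableAt_inv_mul (hgb : IsMetricOn gb U) (hg : IsMetricOn g U)
    (hU : IsOpen U) (hx : x ∈ U) : DifferentiableAt ℝ (fun y => (gb y)⁻¹ * g y) x :=
  ((contDiffAt_matrix_inv (hgb.contDiffAt hU hx) (hgb.nondeg x hx)).differentiableAt
    (by simp)).fun_mul (hg.differentiableAt hU hx)

theorem IsMetricOn.covDerivEnd_inv_mul (hg : IsMetricOn g U) (hgb : IsMetricOn gb U)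
    (hU : IsOpen U) (hx : x ∈ U) {u : ι → ℝ} {S : Matrix ι ι ℝ}
    (hS : connMatrix gb x u = connMatrix g x u + S) :
    covDerivEnd (connMatrix g x) (fun y => (gb y)⁻¹ * g y) x u
      = -(S * ((gb x)⁻¹ * g x) + (gb x)⁻¹ * (Sᵀ * g x)) := by
  have hunit := hgb.nondeg x hx
  have hcancel : ∀ y ∈ U, gb y * ((gb y)⁻¹ * g y) = g y := fun y hy =>
    Matrix.mul_nonsing_inv_cancel_left _ _ (hgb.nondeg y hy)
  have hprod : fderiv ℝ (fun y => gb y * ((gb y)⁻¹ * g y)) x u = fderiv ℝ g x u :=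
    DFunLike.congr_fun (Filter.eventuallyEq_of_mem (hU.mem_nhds hx) hcancel).fderiv_eq u
  rw [fderiv_matrix_mul (hgb.differentiableAt hU hx) (hgb.differentiableAt_inv_mul hg hU hx),
    hg.fderiv_eq hU hx, hgb.fderiv_eq hU hx, hS] at hprod
  refine ((Matrix.isUnit_iff_isUnit_det _).2 hunit).mul_left_cancel ?_
  simp only [covDerivEnd, Ring.lie_def, Matrix.mul_add, Matrix.mul_sub, Matrix.mul_neg,
    Matrix.add_mul, Matrix.transpose_add, Matrix.mul_nonsing_inv_cancel_left _ _ hunit,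
    Matrix.mul_assoc] at hprod ⊢
  rw [← eq_sub_iff_add_eq'] at hprod
  rw [hprod]
  abel

theorem GeodEquiv.isCompatibleAt (hge : GeodEquiv g gb U) (hU : IsOpen U) (hg : IsMetricOn g U)
    (hgb : IsMetricOn gb U) (hx : x ∈ U) {f : (ι → ℝ) → ℝ} (hf : DifferentiableAt ℝ f x) :
    IsCompatibleAt (connMatrix g x) (g x) (fun y => f y • ((gb y)⁻¹ * g y)) x := by
  obtain ⟨φ, hφ⟩ := hge.exists_connMatrix_eq hU hg hgb hx
  set A := (gb x)⁻¹ * g x with hA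
  refine ⟨hg.symm x hx, ?_, -(f x • φ ᵥ* A), -(f x • (gb x)⁻¹ *ᵥ φ), fun u => ?_⟩
  · rw [Matrix.IsSymm, Matrix.transpose_mul, Matrix.transpose_smul, Matrix.transpose_mul,
      Matrix.transpose_nonsing_inv, hg.symm x hx, hgb.symm x hx, smul_mul_assoc, mul_smul_comm,
      Matrix.mul_assoc]
  have hcov : covDerivEnd (connMatrix g x) (fun y => (gb y)⁻¹ * g y) x u
      = -((2 * φ ⬝ᵥ u) • A + vecMulVec u (φ ᵥ* A) + vecMulVec ((gb x)⁻¹ *ᵥ φ) (g x *ᵥ u)) := by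
    rw [hg.covDerivEnd_inv_mul hgb hU hx ((hφ u).trans (add_assoc _ _ _)), ← hA]
    simp only [Matrix.add_mul, Matrix.mul_add, Matrix.transpose_add, Matrix.transpose_smul,
      Matrix.transpose_one, Matrix.transpose_vecMulVec, Matrix.vecMulVec_mul, Matrix.mul_vecMulVec,
      smul_mul_assoc, mul_smul_comm, Matrix.one_mul, ← hA, ← Matrix.mulVec_transpose (g x),
      hg.symm x hx]
    module
  have hscalar : covDerivEnd (connMatrix g x) (fun y => f y • ((gb y)⁻¹ * g y)) x u
      - vecMulVec u (-(f x • φ ᵥ* A)) - vecMulVec (-(f x • (gb x)⁻¹ *ᵥ φ)) (g x *ᵥ u)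
      = (fderiv ℝ f x u - f x * (2 * φ ⬝ᵥ u)) • A := by
    rw [covDerivEnd_smul hf (hgb.differentiableAt_inv_mul hg hU hx), hcov, ← hA]
    simp only [Matrix.vecMulVec_neg, Matrix.neg_vecMulVec, Matrix.vecMulVec_smul,
      Matrix.smul_vecMulVec]
    module
  rw [hscalar]
  exact ((Commute.refl A).smul_right _).smul_left _

end ProjectiveEquivalence

section Integrability

open scoped Matrix.Norms.Operator

variable {g gb : (ι → ℝ) → Matrix ι ι ℝ} {U : Set (ι → ℝ)} {chi1 chi2 : (ι → ℝ) → ℝ[X]}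
  {x : ι → ℝ}

theorem AdmissibleFact.symm {L : (ι → ℝ) → Matrix ι ι ℝ} (h : AdmissibleFact L U chi1 chi2) :
    AdmissibleFact L U chi2 chi1 where
  factor x hx := (h.factor x hx).trans (mul_comm _ _)
  monic1 := h.monic2
  monic2 := h.monic1
  deg1 := h.deg2
  deg2 := h.deg1
  smooth1 := h.smooth2
  smooth2 := h.smooth1
  coprime x hx := fun ⟨z, h2, h1⟩ => h.coprime x hx ⟨z, h1, h2⟩

theorem AdmissibleFact.isCoprime {L : (ι → ℝ) → Matrix ι ι ℝ} (h : AdmissibleFact L U chi1 chi2)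
    (hx : x ∈ U) : IsCoprime (chi1 x) (chi2 x) :=
  (Polynomial.isCoprime_iff_aeval_ne_zero_of_isAlgClosed _ ℂ _ _).2 fun z =>
    not_and_or.1 fun hz => h.coprime x hx ⟨z, hz⟩

theorem IsMetricOn.differentiableAt_det_div_det_rpow (hg : IsMetricOn g U) (hgb : IsMetricOn gb U)
    (hU : IsOpen U) (hx : x ∈ U) (r : ℝ) :
    DifferentiableAt ℝ (fun y => ((gb y).det / (g y).det) ^ r) x := by
  have h0 := (hg.nondeg x hx).ne_zero
  have hdiv : ContDiffAt ℝ (⊤ : ℕ∞) (fun y => (gb y).det / (g y).det) x :=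
    (contDiffAt_matrix_det (hgb.contDiffAt hU hx)).div
      (contDiffAt_matrix_det (hg.contDiffAt hU hx)) h0
  exact (hdiv.differentiableAt (by simp)).rpow_const
    (Or.inl (div_ne_zero (hgb.nondeg x hx).ne_zero h0))

theorem stmt0_general (hU : IsOpen U) (hg : IsMetricOn g U) (hgb : IsMetricOn gb U)
    (hge : GeodEquiv g gb U) {f : (ι → ℝ) → ℝ} (hf : DifferentiableOn ℝ f U)
    {p q : (ι → ℝ) → ℝ[X]} (hp : ∀ k, DifferentiableOn ℝ (fun x => (p x).coeff k) U)
    (hpq : ∀ x ∈ U, (f x • ((gb x)⁻¹ * g x)).charpoly = p x * q x)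
    (hcop : ∀ x ∈ U, IsCoprime (p x) (q x)) :
    IsIntegrableDist U (Dker (fun x => f x • ((gb x)⁻¹ * g x)) p) := by
  intro u v hu hv hpu hpv x hx
  have hUx := hU.mem_nhds hx
  have hfx := hf.differentiableAt hUx
  exact (hge.isCompatibleAt hU hg hgb hx hfx).aeval_mulVec_lieBracket_eq_zero
    (hg.connMatrix_mulVec_comm hU hx) (hfx.fun_smul (hgb.differentiableAt_inv_mul hg hU hx))
    (fun k => (hp k).differentiableAt hUx) (Filter.eventually_of_mem hUx hpq) (hcop x hx)
    ((hu.contDiffAt hUx).differentiableAt (by simp))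
    ((hv.contDiffAt hUx).differentiableAt (by simp))
    (Filter.eventually_of_mem hUx hpu) (Filter.eventually_of_mem hUx hpv)

theorem GeodEquiv.isIntegrableDist_Dker_Lten (hge : GeodEquiv g gb U) (hU : IsOpen U)
    (hg : IsMetricOn g U) (hgb : IsMetricOn gb U)
    (hfac : AdmissibleFact (Lten g gb) U chi1 chi2) :
    IsIntegrableDist U (Dker (Lten g gb) chi1) :=
  stmt0_general hU hg hgb hge
    (fun _ hx => (hg.differentiableAt_det_div_det_rpow hgb hU hx _).differentiableWithinAt)
    (fun k => (hfac.smooth1 k).differentiableOn (by simp)) hfac.factor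
    fun _ hx => hfac.isCoprime hx

end Integrability

theorem stmt0 {n : ℕ} (U : Set (Fin n → ℝ)) (hU : IsOpen U)
    (g gb : (Fin n → ℝ) → Matrix (Fin n) (Fin n) ℝ)
    (hg : IsMetricOn g U) (hgb : IsMetricOn gb U)
    (hge : GeodEquiv g gb U)
    (chi1 chi2 : (Fin n → ℝ) → Polynomial ℝ)
    (hfac : AdmissibleFact (Lten g gb) U chi1 chi2) :
    IsIntegrableDist U (Dker (Lten g gb) chi1) ∧
      IsIntegrableDist U (Dker (Lten g gb) chi2) := by
  exact ⟨hge.isIntegrableDist_Dker_Lten hU hg hgb hfac,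
    hge.isIntegrableDist_Dker_Lten hU hg hgb hfac.symm⟩
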